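/- arXiv:1809.01767 — 3 statements merged into one kernel-verified Lean document; each statement's English description precedes it below -/
import Mathlib

section
/- For all positive integers d, k, and l with k > l, the maximum size γ(Z_d,{k,l}) of a (k,l)-sum-free arithmetic progression in Z_d whose common difference is relatively prime to d equals ⌈(d − (δ − r))/(k + l)⌉, where δ = gcd(d, k − l) and r is the remainder of l·⌈(d − δ)/(k + l)⌉ upon division by δ. -/
/-!
Write `m = n + 1` and `δ = gcd d (k - l)`. The `h`-fold sumset of `{a, a + b, …, a + n b}` is
`{h a + i b : i ≤ h n}` (`mem_foldSum_apSet`). If `b` is invertible and `c` denotes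
`(k - l) a b⁻¹`, then the `k`-fold and `l`-fold sumsets are disjoint exactly when no `i ≤ k n` and
`j ≤ l n` satisfy `c + i = j` in `ZMod d`; for the representative `0 ≤ c < d` this says
`l n < c` and `c + k n < d`. The possible values of `c` are exactly the multiples of `δ`, so it is
best to take the least multiple of `δ` above `l n`, namely `l n - l n % δ + δ`. Hence a progression
of size `n + 1` exists if and only if `(k + l) n + (δ - l n % δ) < d`
(`lt_of_sumFree` and `exists_sumFree`).

With `M = ⌈(d - δ) / (k + l)⌉` this criterion holds for every size up to `M`, and fails for every
size above `M + 1` because `δ ≤ k - l < k + l`. For size `M + 1` it reads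
`(k + l) M < d - (δ - r)`, which is also the condition for `⌈(d - (δ - r)) / (k + l)⌉` to equal
`M + 1` rather than `M`.
-/

open Finset Pointwise

/-- The `h`-fold sumset of a finite set `A`: all sums of `h` not-necessarily-distinct
elements of `A` (with the convention that the `0`-fold sumset is `{0}`). -/
def foldSum {G : Type*} [AddCommMonoid G] [DecidableEq G] : ℕ → Finset G → Finset G
  | 0, _ => {0}
  | n + 1, A => A + foldSum n A

/-- `A` is `(k,l)`-sum-free if the `k`-fold and `l`-fold sumsets of `A` are disjoint. -/
def KLSumFree {G : Type*} [AddCommMonoid G] [DecidableEq G] (k l : ℕ) (A : Finset G) : Prop :=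
  Disjoint (foldSum k A) (foldSum l A)

/-- `mu G k l` is the maximum size of a `(k,l)`-sum-free subset of `G`. -/
noncomputable def mu (G : Type*) [AddCommMonoid G] [DecidableEq G] (k l : ℕ) : ℕ :=
  sSup {m | ∃ A : Finset G, KLSumFree k l A ∧ A.card = m}

/-- Ceiling division: `cdiv a b = ⌈a / b⌉` for `b > 0`. -/
def cdiv (a b : ℕ) : ℕ := (a + b - 1) / b

/-- The arithmetic progression `{a, a+b, ..., a+(m-1)b}` in `ZMod d`. -/
def apSet (d : ℕ) (a b : ZMod d) (m : ℕ) : Finset (ZMod d) :=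
  (Finset.range m).image (fun i => a + i • b)

/-- Maximum size of a `(k,l)`-sum-free arithmetic progression in `ZMod d`. -/
noncomputable def alphaZ (d k l : ℕ) : ℕ :=
  sSup {m | ∃ a b : ZMod d, (apSet d a b m).card = m ∧ KLSumFree k l (apSet d a b m)}

/-- Maximum size of a `(k,l)`-sum-free arithmetic progression in `ZMod d` whose common
difference is relatively prime to `d`. -/
noncomputable def gammaZ (d k l : ℕ) : ℕ :=
  sSup {m | ∃ a b : ZMod d, Nat.gcd (ZMod.val b) d = 1 ∧
    (apSet d a b m).card = m ∧ KLSumFree k l (apSet d a b m)}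

lemma mem_foldSum_apSet (d : ℕ) (a b : ZMod d) (n h : ℕ) (x : ZMod d) :
    x ∈ foldSum h (apSet d a b (n + 1)) ↔ ∃ i ≤ h * n, x = h * a + i * b := by
  induction h generalizing x with
  | zero => simp [foldSum]
  | succ h ih =>
    simp only [foldSum, Finset.mem_add, ih]
    constructor
    · rintro ⟨y, hy, z, ⟨i, hi, rfl⟩, rfl⟩
      simp only [apSet, Finset.mem_image, Finset.mem_range] at hy
      obtain ⟨j, hj, rfl⟩ := hy
      refine ⟨i + j, by rw [Nat.succ_mul]; omega, ?_⟩
      push_cast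
      rw [nsmul_eq_mul]
      ring
    · rintro ⟨i, hi, rfl⟩
      rw [Nat.succ_mul] at hi
      -- Split `i` as `min i n`, carried by the new summand, plus the remaining `i - n`.
      refine ⟨a + (min i n) • b, ?_, _, ⟨i - n, by omega, rfl⟩, ?_⟩
      · simp only [apSet, Finset.mem_image, Finset.mem_range]
        exact ⟨min i n, by omega, rfl⟩
      · have hs : (i : ZMod d) = ((min i n : ℕ) : ZMod d) + ((i - n : ℕ) : ZMod d) := by
          rw [← Nat.cast_add]
          congr 1
          omega
        rw [hs, nsmul_eq_mul]
        push_cast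
        ring

/-- Every multiple of `gcd d e` is, modulo `d`, a multiple of `e` (Bézout). -/
lemma exists_mul_eq (d e c : ℕ) (h : Nat.gcd d e ∣ c) : ∃ a : ZMod d, (e : ZMod d) * a = c := by
  obtain ⟨t, rfl⟩ := h
  refine ⟨(Nat.gcdB d e : ZMod d) * t, ?_⟩
  have := congrArg (Int.cast : ℤ → ZMod d) (Nat.gcd_eq_gcd_ab d e)
  push_cast at this
  rw [ZMod.natCast_self] at this
  push_cast
  rw [this]
  ring

/-- Necessity of the criterion for size `n + 1`. -/
lemma lt_of_sumFree (d k l n : ℕ) (hd : 0 < d) (hkl : l < k) (a b : ZMod d)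
    (hb : Nat.gcd (ZMod.val b) d = 1) (hA : KLSumFree k l (apSet d a b (n + 1))) :
    (k + l) * n + (Nat.gcd d (k - l) - (l * n) % Nat.gcd d (k - l)) < d := by
  have : NeZero d := ⟨hd.ne'⟩
  obtain ⟨f, rfl⟩ := Nat.exists_eq_add_of_le hkl.le
  rw [Nat.add_sub_cancel_left]
  set δ := Nat.gcd d f with hδ
  have hδ0 : 0 < δ := Nat.gcd_pos_of_pos_left _ hd
  have hub : b⁻¹ * b = 1 := by
    have h1 := ZMod.coe_mul_inv_eq_one (n := d) b.val hb
    rw [ZMod.natCast_zmod_val] at h1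
    rw [mul_comm]; exact h1
  set w : ZMod d := b⁻¹ * a with hw
  have ha : a = w * b := by rw [hw, mul_right_comm, hub, one_mul]
  set v := ((f : ZMod d) * w).val with hv
  have hvd : v < d := ZMod.val_lt _
  have hvc : (v : ZMod d) = f * w := ZMod.natCast_zmod_val _
  have hdvd : δ ∣ v := by
    have h1 : ((v : ℕ) : ZMod d) = ((f * w.val : ℕ) : ZMod d) := by
      rw [hvc]; push_cast; rw [ZMod.natCast_zmod_val]
    have h2 := (ZMod.natCast_eq_natCast_iff _ _ _).1 h1
    exact (h2.dvd_iff (Nat.gcd_dvd_left d f)).2 ((Nat.gcd_dvd_right d f).mul_right _)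
  have key : ∀ i ≤ (l + f) * n, ∀ j ≤ l * n, ((v : ZMod d) + i) ≠ j := by
    intro i hi j hj hij
    refine Finset.disjoint_left.1 hA ((mem_foldSum_apSet d a b n _ _).2 ⟨i, hi, rfl⟩)
      ((mem_foldSum_apSet d a b n _ _).2 ⟨j, hj, ?_⟩)
    rw [← hij, hvc, ha]
    push_cast
    ring
  have h1 : l * n < v := by
    by_contra hc
    exact key 0 (Nat.zero_le _) v (by omega) (by simp)
  have h2 : v + (l + f) * n < d := by
    by_contra hc
    refine key (d - v) (by omega) 0 (Nat.zero_le _) ?_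
    rw [← Nat.cast_add, Nat.add_sub_cancel' hvd.le]
    simp
  -- As a multiple of `δ` exceeding `l n`, the residue `v` is at least `l n - l n % δ + δ`.
  have h3 : l * n + (δ - (l * n) % δ) ≤ v := by
    obtain ⟨t, ht⟩ := hdvd
    have h4 := Nat.div_add_mod (l * n) δ
    have h5 := Nat.mod_lt (l * n) hδ0
    have h6 : l * n / δ < t := by
      rw [Nat.div_lt_iff_lt_mul hδ0, mul_comm t, ← ht]; exact h1
    have h7 : δ * (l * n / δ + 1) ≤ δ * t := Nat.mul_le_mul_left _ h6
    rw [Nat.mul_add] at h7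
    omega
  have h8 : (l + f + l) * n = (l + f) * n + l * n := by ring
  omega

/-- Sufficiency of the criterion for size `n + 1`, with common difference `1`. -/
lemma exists_sumFree (d k l n : ℕ) (hd : 0 < d) (hl : 0 < l) (hkl : l < k)
    (h : (k + l) * n + (Nat.gcd d (k - l) - (l * n) % Nat.gcd d (k - l)) < d) :
    ∃ a b : ZMod d, Nat.gcd (ZMod.val b) d = 1 ∧
      (apSet d a b (n + 1)).card = n + 1 ∧ KLSumFree k l (apSet d a b (n + 1)) := by
  have : NeZero d := ⟨hd.ne'⟩
  set δ := Nat.gcd d (k - l) with hδ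
  have hδ0 : 0 < δ := Nat.gcd_pos_of_pos_left _ hd
  have h5 := Nat.mod_lt (l * n) hδ0
  have h4 := Nat.div_add_mod (l * n) δ
  have h8 : (k + l) * n = k * n + l * n := by ring
  have hdc : δ ∣ l * n + (δ - (l * n) % δ) := by
    refine ⟨l * n / δ + 1, ?_⟩
    rw [Nat.mul_add]
    omega
  obtain ⟨a, ha⟩ := exists_mul_eq d (k - l) _ hdc
  set c := l * n + (δ - (l * n) % δ) with hc
  have hn : n ≤ k * n := Nat.le_mul_of_pos_left _ (by omega)
  refine ⟨a, 1, ?_, ?_, ?_⟩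
  · have h1 : ((1 : ℕ) : ZMod d).val = 1 % d := ZMod.val_natCast _ _
    rw [Nat.cast_one] at h1
    rw [h1, ← Nat.gcd_rec, Nat.gcd_one_right]
  · rw [apSet, Finset.card_image_of_injOn, Finset.card_range]
    intro i hi j hj hij
    simp only [Finset.coe_range, Set.mem_Iio] at hi hj
    simp only [nsmul_eq_mul, mul_one, add_right_inj] at hij
    exact Nat.ModEq.eq_of_lt_of_lt ((ZMod.natCast_eq_natCast_iff _ _ _).1 hij)
      (by omega) (by omega)
  · refine Finset.disjoint_left.2 fun x hx hy => ?_
    obtain ⟨i, hi, rfl⟩ := (mem_foldSum_apSet d a 1 n _ _).1 hx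
    obtain ⟨j, hj, hij⟩ := (mem_foldSum_apSet d a 1 n _ _).1 hy
    have h1 : ((c + i : ℕ) : ZMod d) = (j : ℕ) := by
      rw [Nat.cast_add, ← ha, Nat.cast_sub hkl.le]
      linear_combination hij
    have h2 := Nat.ModEq.eq_of_lt_of_lt ((ZMod.natCast_eq_natCast_iff _ _ _).1 h1)
      (by omega) (by omega)
    omega

lemma lt_cdiv_iff (a b n : ℕ) (hb : 0 < b) : n < cdiv a b ↔ b * n < a := by
  rw [cdiv, Nat.lt_iff_add_one_le, Nat.le_div_iff_mul_le hb]
  have : (n + 1) * b = b * n + b := by ring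
  omega

/-- The closed formula selects exactly the sizes `n + 1` allowed by the criterion. -/
lemma lt_formula_iff (d s l δ n : ℕ) (hδ : 0 < δ) (hδd : δ ≤ d) (hδs : δ < s) :
    n < cdiv (d - (δ - (l * cdiv (d - δ) s) % δ)) s ↔ s * n + (δ - (l * n) % δ) < d := by
  have hs : 0 < s := by omega
  rw [lt_cdiv_iff _ _ _ hs]
  set M := cdiv (d - δ) s with hM
  have hMlt : ∀ n, n < M ↔ s * n < d - δ := fun n => lt_cdiv_iff _ _ _ hs
  have h1 := Nat.mod_lt (l * n) hδ
  have h2 := Nat.mod_lt (l * M) hδ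
  rcases lt_trichotomy n M with h | h | h
  · have := (hMlt n).1 h
    omega
  · rw [h] at h1 ⊢
    omega
  · have h3 := mt (hMlt M).2 (lt_irrefl M)
    have h4 : s * (M + 1) ≤ s * n := Nat.mul_le_mul_left _ h
    rw [Nat.mul_add] at h4
    omega

theorem stmt1 (d k l : ℕ) (hd : 0 < d) (hl : 0 < l) (hkl : l < k) :
    gammaZ d k l =
      cdiv (d - (Nat.gcd d (k - l) -
        (l * cdiv (d - Nat.gcd d (k - l)) (k + l)) % Nat.gcd d (k - l))) (k + l) := by
  have hle : Nat.gcd d (k - l) ≤ k - l := Nat.gcd_le_right _ (by omega)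
  have hiff := fun n => lt_formula_iff d (k + l) l (Nat.gcd d (k - l)) n
    (Nat.gcd_pos_of_pos_left _ hd) (Nat.gcd_le_left _ hd) (by omega)
  set F := cdiv (d - (Nat.gcd d (k - l) -
        (l * cdiv (d - Nat.gcd d (k - l)) (k + l)) % Nat.gcd d (k - l))) (k + l) with hF
  refine IsGreatest.csSup_eq ⟨?_, ?_⟩
  · rcases hF0 : F with _ | n
    · -- The empty progression has size `0`, and its positive-fold sumsets are empty.
      refine ⟨0, 1, ?_, by simp [apSet], ?_⟩
      · have h1 : ((1 : ℕ) : ZMod d).val = 1 % d := ZMod.val_natCast _ _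
        rw [Nat.cast_one] at h1
        rw [h1, ← Nat.gcd_rec, Nat.gcd_one_right]
      · obtain ⟨l', rfl⟩ := Nat.exists_eq_succ_of_ne_zero hl.ne'
        simp [KLSumFree, foldSum, apSet]
    · exact exists_sumFree d k l n hd hl hkl ((hiff n).1 (by omega))
  · rintro m ⟨a, b, hb, -, hA⟩
    rcases m with _ | n
    · exact Nat.zero_le _
    · exact (hiff n).2 (lt_of_sumFree d k l n hd hkl a b hb hA)
end

section
/- For all positive integers d, k, and l with k > l, there exists a positive divisor c of d for which α(Z_d,{k,l}) ≤ γ(Z_c,{k,l}) · (d/c). -/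
/-!
Write an optimal progression as `A = {a, a + b, …, a + (m-1)b}` with `m ≥ 1`, and put
`g = gcd(b, d)`, so that `m ≤ d / g`.

* If `g = 1`, then `c = d` works by definition.
* If `g ∤ (k - l)a`, the image of `a` in `ℤ/g` is a sum-free singleton, so `γ(ℤ/g) ≥ 1` and
  `c = g` works because `m ≤ d / g`.
* If `g ≥ 2` divides `(k - l)a`, then `kA` and `lA` are progressions in the same coset of the
  subgroup of order `d / g` generated by `b`, and disjointness forces
  `(k + l)(m - 1) + 2 ≤ d / g ≤ d / 2`. Since `d ∤ k - l`, the number `e = gcd(k - l, d)` is at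
  most `d / 2`, and this leaves room for a multiple `y = (k - l)x` of `e` with
  `l(m - 1) < y` and `y + k(m - 1) < d`. The interval `{x, …, x + m - 1}` is then sum-free of
  size `m` in `ℤ/d`, so `c = d` works.

All sum-freeness conditions go through the criterion `klSumFree_apSet_iff`.
-/

open Finset Pointwise

lemma klSumFree_apSet_iff (d : ℕ) (a b : ZMod d) (n k l : ℕ) :
    KLSumFree k l (apSet d a b (n + 1)) ↔
      ∀ i ≤ k * n, ∀ j ≤ l * n, (k * a + i * b : ZMod d) ≠ l * a + j * b := by
  unfold KLSumFree
  rw [Finset.disjoint_left]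
  simp only [mem_foldSum_apSet]
  constructor
  · intro h i hi j hj e
    exact h ⟨i, hi, rfl⟩ ⟨j, hj, e⟩
  · rintro h _ ⟨i, hi, rfl⟩ ⟨j, hj, e⟩
    exact h i hi j hj e

lemma card_apSet_le (d : ℕ) [NeZero d] (a b : ZMod d) (m : ℕ) : (apSet d a b m).card ≤ d :=
  (Finset.card_le_univ _).trans_eq (ZMod.card d)

lemma le_gammaZ (d k l m : ℕ) [NeZero d] (a b : ZMod d) (hb : Nat.gcd (ZMod.val b) d = 1)
    (hc : (apSet d a b m).card = m) (hs : KLSumFree k l (apSet d a b m)) :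
    m ≤ gammaZ d k l := by
  refine le_csSup ⟨d, ?_⟩ ⟨a, b, hb, hc, hs⟩
  rintro _ ⟨a, b, -, h, -⟩
  exact h ▸ card_apSet_le d a b _

lemma alphaZ_attained (d k l : ℕ) [NeZero d] (hk : 0 < k) :
    ∃ a b : ZMod d, (apSet d a b (alphaZ d k l)).card = alphaZ d k l ∧
      KLSumFree k l (apSet d a b (alphaZ d k l)) := by
  refine Nat.sSup_mem
    (s := {m | ∃ a b : ZMod d, (apSet d a b m).card = m ∧ KLSumFree k l (apSet d a b m)})
    ⟨0, 0, 0, by simp [apSet], ?_⟩ ⟨d, ?_⟩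
  · -- The empty set is sum-free because `k > 0`.
    obtain ⟨k, rfl⟩ := Nat.exists_eq_succ_of_ne_zero hk.ne'
    simp [KLSumFree, apSet, foldSum]
  · rintro _ ⟨a, b, h, -⟩
    exact h ▸ card_apSet_le d a b _

lemma gcd_val_one (d : ℕ) : Nat.gcd (ZMod.val (1 : ZMod d)) d = 1 := by
  rw [ZMod.val_one_eq_one_mod, ← Nat.gcd_rec, Nat.gcd_one_right]

lemma card_apSet_one (d : ℕ) (a : ZMod d) (m : ℕ) (hm : m ≤ d) : (apSet d a 1 m).card = m := by
  unfold apSet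
  rw [Finset.card_image_of_injOn, Finset.card_range]
  intro i hi j hj h
  simp only [Finset.coe_range, Set.mem_Iio] at hi hj
  simp only [nsmul_eq_mul, mul_one, add_right_inj] at h
  rw [ZMod.natCast_eq_natCast_iff] at h
  exact Nat.ModEq.eq_of_lt_of_lt h (by omega) (by omega)

/-- A progression without repetitions is no longer than the order of its difference. -/
lemma le_of_card_apSet (d m n : ℕ) (a b : ZMod d) (hn : 0 < n) (hnb : (n : ZMod d) * b = 0)
    (h : (apSet d a b m).card = m) : m ≤ n := by
  by_contra! hlt
  have hinj := Finset.card_image_iff.mp (h.trans (Finset.card_range m).symm)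
  have := @hinj n (by simpa using hlt) 0 (by simp; omega) (by simp [hnb])
  omega

/-- If `(k - l)a` is a multiple of `b` and `n` is a period of `b`, then disjointness of the two
sumsets, both lying in one coset of `⟨b⟩`, bounds the total number of their terms by `n`. -/
lemma length_bound (d k l m n : ℕ) (a b : ZMod d) (t : ℤ) (hn : 0 < n)
    (hnb : (n : ZMod d) * b = 0) (ht : ((k : ZMod d) - l) * a = t * b)
    (hs : KLSumFree k l (apSet d a b (m + 1))) : (k + l) * m + 2 ≤ n := by
  rw [klSumFree_apSet_iff] at hs
  by_contra! hlt
  rw [add_mul] at hlt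
  have hn' : (0 : ℤ) < n := by exact_mod_cast hn
  -- The shifted residue `s` of `t` is below `n`, hence splits as `s = j + i'` within the ranges.
  obtain ⟨s, hsv⟩ := Int.eq_ofNat_of_zero_le (Int.emod_nonneg (t + (k * m : ℕ)) hn'.ne')
  have hslt := Int.emod_lt_of_pos (t + (k * m : ℕ)) hn'
  have hdiv := Int.emod_add_mul_ediv (t + (k * m : ℕ)) n
  rw [hsv] at hslt hdiv
  have hslt' : s < n := by exact_mod_cast hslt
  set q := (t + (k * m : ℕ)) / (n : ℤ)
  refine hs (k * m - (s - min s (l * m))) (by omega) (min s (l * m)) (by omega) ?_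
  have hrel : t + ((k * m - (s - min s (l * m)) : ℕ) : ℤ) - ((min s (l * m) : ℕ) : ℤ) = n * q := by
    omega
  have hrel' := congrArg (Int.cast : ℤ → ZMod d) hrel
  simp only [Int.cast_add, Int.cast_sub, Int.cast_mul, Int.cast_natCast] at hrel'
  linear_combination ht + b * hrel' + (q : ZMod d) * hnb

/-- If `d ∤ k - l` and `(k + l)m + 2 ≤ d / 2`, some interval of length `m + 1` in `ZMod d` is
`(k,l)`-sum-free. -/
lemma exists_interval (d k l m : ℕ) (hd : 0 < d) (hkl : l < k) (hnd : ¬ d ∣ k - l)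
    (hlen : 2 * ((k + l) * m + 2) ≤ d) :
    ∃ x : ZMod d, KLSumFree k l (apSet d x 1 (m + 1)) := by
  obtain ⟨D, rfl⟩ := Nat.exists_eq_add_of_lt hkl
  have hD : l + D + 1 - l = D + 1 := by omega
  rw [hD] at hnd
  obtain ⟨f, hf⟩ := Nat.gcd_dvd_right (D + 1) d
  have hbez := Nat.gcd_eq_gcd_ab (D + 1) d
  have hepos : 0 < Nat.gcd (D + 1) d := Nat.gcd_pos_of_pos_right _ hd
  have hene : Nat.gcd (D + 1) d ≠ d := fun h => hnd (h ▸ Nat.gcd_dvd_left (D + 1) d)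
  generalize hu : Nat.gcdA (D + 1) d = u at hbez
  generalize Nat.gcdB (D + 1) d = v at hbez
  generalize Nat.gcd (D + 1) d = e at *
  have he2 : 2 * e ≤ d := by
    have : 2 ≤ f := by
      by_contra! h
      interval_cases f <;> omega
    nlinarith
  -- `e * r` is the least multiple of `e` exceeding `l * m`.
  obtain ⟨r, hr1, hr2⟩ : ∃ r, l * m < e * r ∧ e * r ≤ l * m + e := by
    refine ⟨l * m / e + 1, ?_, ?_⟩
    · exact Nat.lt_mul_div_succ _ hepos
    · have := Nat.mul_div_le (l * m) e
      rw [mul_add]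
      omega
  refine ⟨((u * r : ℤ) : ZMod d), ?_⟩
  rw [klSumFree_apSet_iff]
  intro i hi j hj heq
  have hz : ((e * r + i - j : ℤ) : ZMod d) = 0 := by
    have hb' := congrArg (Int.cast : ℤ → ZMod d) hbez
    push_cast at hb' heq ⊢
    rw [ZMod.natCast_self] at hb'
    linear_combination heq + (r : ZMod d) * hb'
  rw [ZMod.intCast_zmod_eq_zero_iff_dvd] at hz
  rw [← Nat.cast_mul] at hz
  rw [add_mul] at hlen
  have := Int.le_of_dvd (by omega) hz
  omega

theorem stmt3 (d k l : ℕ) (hd : 0 < d) (hl : 0 < l) (hkl : l < k) :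
    ∃ c : ℕ, 0 < c ∧ c ∣ d ∧ alphaZ d k l ≤ gammaZ c k l * (d / c) := by
  have : NeZero d := ⟨hd.ne'⟩
  obtain ⟨a, b, hcard, hs⟩ := alphaZ_attained d k l (by omega)
  generalize alphaZ d k l = M at *
  rcases M with _ | m
  · exact ⟨1, one_pos, one_dvd _, Nat.zero_le _⟩
  by_cases hg : Nat.gcd b.val d = 1
  · exact ⟨d, hd, dvd_rfl, by simpa [Nat.div_self hd] using le_gammaZ d k l _ a b hg hcard hs⟩
  have hgpos : 0 < Nat.gcd b.val d := Nat.gcd_pos_of_pos_right _ hd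
  have hbez := Nat.gcd_eq_gcd_ab b.val d
  obtain ⟨n, hn⟩ := Nat.gcd_dvd_right b.val d
  obtain ⟨w, hw⟩ := Nat.gcd_dvd_left b.val d
  generalize Nat.gcdA b.val d = u at hbez
  generalize Nat.gcdB b.val d = v at hbez
  generalize Nat.gcd b.val d = g at *
  have hnpos : 0 < n := by
    rcases Nat.eq_zero_or_pos n with rfl | h
    · omega
    · exact h
  have hbv : ((b.val : ℕ) : ZMod d) = b := ZMod.natCast_zmod_val b
  have hav : ((a.val : ℕ) : ZMod d) = a := ZMod.natCast_zmod_val a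
  have hnb : (n : ZMod d) * b = 0 := by
    rw [← hbv, hw, ← Nat.cast_mul, ZMod.natCast_eq_zero_iff]
    exact ⟨w, by rw [hn]; ring⟩
  have hmn : m + 1 ≤ n := le_of_card_apSet d _ n a b hnpos hnb hcard
  by_cases hdiv : (g : ℤ) ∣ ((k : ℤ) - l) * a.val
  · obtain ⟨q, hq⟩ := hdiv
    have ht : ((k : ZMod d) - l) * a = ((u * q : ℤ) : ZMod d) * b := by
      have h1 := congrArg (Int.cast : ℤ → ZMod d) hbez
      have h2 := congrArg (Int.cast : ℤ → ZMod d) hq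
      push_cast at h1 h2 ⊢
      rw [hbv, ZMod.natCast_self] at h1
      rw [hav] at h2
      linear_combination h2 + (q : ZMod d) * h1
    have hlen := length_bound d k l m n a b _ hnpos hnb ht hs
    have hnd : ¬ d ∣ k - l := by
      intro h
      rw [← ZMod.natCast_eq_zero_iff, Nat.cast_sub hkl.le] at h
      rw [klSumFree_apSet_iff] at hs
      exact hs 0 (Nat.zero_le _) 0 (Nat.zero_le _) (by linear_combination a * h)
    have h2n : 2 * n ≤ d := by
      have : 2 ≤ g := by omega
      rw [hn]
      exact Nat.mul_le_mul_right n this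
    obtain ⟨x, hx⟩ := exists_interval d k l m hd hkl hnd (by omega)
    refine ⟨d, hd, dvd_rfl, ?_⟩
    rw [Nat.div_self hd, mul_one]
    exact le_gammaZ d k l _ x 1 (gcd_val_one d) (card_apSet_one d x _ (by omega)) hx
  · have : NeZero g := ⟨hgpos.ne'⟩
    refine ⟨g, hgpos, ⟨n, hn⟩, ?_⟩
    have h1 : 1 ≤ gammaZ g k l := by
      refine le_gammaZ g k l 1 (a.val : ZMod g) 1 (gcd_val_one g)
        (card_apSet_one g _ 1 hgpos) ?_
      rw [show (1 : ℕ) = 0 + 1 from rfl, klSumFree_apSet_iff]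
      intro i hi j hj heq
      obtain rfl : i = 0 := by omega
      obtain rfl : j = 0 := by omega
      apply hdiv
      rw [← ZMod.intCast_zmod_eq_zero_iff_dvd]
      push_cast
      linear_combination heq
    have h2 : d / g = n := by rw [hn, Nat.mul_div_cancel_left n hgpos]
    rw [h2]
    nlinarith
end

section
/- Let p be a prime and let k > l be positive integers. If p divides k − l, then the maximum size of a (k,l)-sum-free subset of Z_p is 0; otherwise, it equals ⌈(p−1)/(k+l)⌉. -/
/-!
If `p ∣ k - l` then `k • a = l • a` for every `a : ZMod p`, so only the empty set is
`(k,l)`-sum-free.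

Otherwise let `m = #A > 0`. By Cauchy–Davenport `#(hA) ≥ min p (h (m - 1) + 1)`
(`min_le_card_foldSum`). Disjointness of the nonempty sets `kA` and `lA` gives
`#(kA) + #(lA) ≤ p`, hence `(k + l) (m - 1) + 2 ≤ p`, i.e. `m ≤ (p - 2) / (k + l) + 1`, which is
the claimed ceiling (`cdiv_eq`). The bound is attained by an interval `{a, a + 1, …, a + q}` with
`q = (p - 2) / (k + l)`: differences of elements of `kA` and `lA` lie in
`(k - l) a + [-l q, k q]`, and if `a` solves `(k - l) a = l q + 1` this is
`[1, (k + l) q + 1]`, which avoids `0` modulo `p`.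
-/

open Finset Pointwise

lemma nsmul_mem_foldSum {G : Type*} [AddCommMonoid G] [DecidableEq G] {A : Finset G} {a : G}
    (ha : a ∈ A) (n : ℕ) : n • a ∈ foldSum n A := by
  induction n with
  | zero => simp [foldSum]
  | succ n ih =>
    rw [succ_nsmul', foldSum]
    exact Finset.add_mem_add ha ih

/-- Iterated Cauchy–Davenport, for a set of size at least `q + 1`. -/
lemma min_le_card_foldSum {p : ℕ} (hp : p.Prime) {A : Finset (ZMod p)} {q : ℕ}
    (hA : q + 1 ≤ A.card) (n : ℕ) : min p (n * q + 1) ≤ (foldSum n A).card := by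
  have hne : A.Nonempty := Finset.card_pos.mp (by omega)
  induction n with
  | zero => simp [foldSum]
  | succ n ih =>
    have h := ZMod.cauchy_davenport hp hne ⟨_, nsmul_mem_foldSum hne.choose_spec n⟩
    rw [foldSum]
    have e : (n + 1) * q = n * q + q := by ring
    rw [e]
    omega

/-- Elements of the `n`-fold sumset of `{a, a + 1, …, a + q}` lie in `n a + [0, n q]`. -/
lemma exists_of_mem_foldSum_interval {p : ℕ} (a : ZMod p) (q n : ℕ) {x : ZMod p}
    (hx : x ∈ foldSum n ((Finset.range (q + 1)).image (fun i : ℕ => a + (i : ZMod p)))) :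
    ∃ i : ℕ, i ≤ n * q ∧ x = (n : ZMod p) * a + (i : ZMod p) := by
  induction n generalizing x with
  | zero => exact ⟨0, by simp, by simpa [foldSum] using hx⟩
  | succ n ih =>
    rw [foldSum, Finset.mem_add] at hx
    obtain ⟨y, hy, z, hz, rfl⟩ := hx
    obtain ⟨j, hj, rfl⟩ := Finset.mem_image.mp hy
    obtain ⟨i, hi, rfl⟩ := ih hz
    have hj' := Finset.mem_range.mp hj
    refine ⟨j + i, ?_, by push_cast; ring⟩
    have e : (n + 1) * q = n * q + q := by ring
    rw [e]
    omega

lemma cdiv_eq {p d : ℕ} (hp : 2 ≤ p) (hd : 0 < d) : cdiv (p - 1) d = (p - 2) / d + 1 := by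
  rw [cdiv, ← Nat.add_div_right _ hd]
  congr 1
  omega

lemma card_le_of_klSumFree {p k l : ℕ} (hp : p.Prime) (hl : 0 < l) {A : Finset (ZMod p)}
    (hA : KLSumFree k l A) : A.card ≤ (p - 2) / (k + l) + 1 := by
  have : NeZero p := ⟨hp.ne_zero⟩
  rcases Nat.eq_zero_or_pos A.card with h0 | hpos
  · exact h0.le.trans (Nat.zero_le _)
  obtain ⟨q, hq⟩ : ∃ q, A.card = q + 1 := ⟨A.card - 1, by omega⟩
  have h1 := min_le_card_foldSum hp hq.ge k
  have h2 := min_le_card_foldSum hp hq.ge l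
  have h3 : (foldSum k A).card + (foldSum l A).card ≤ p := by
    rw [← Finset.card_union_of_disjoint hA]
    simpa [ZMod.card] using Finset.card_le_univ (foldSum k A ∪ foldSum l A)
  have hp2 := hp.two_le
  have h4 : k * q + l * q + 2 ≤ p := by omega
  rw [hq]
  have : q ≤ (p - 2) / (k + l) := by
    rw [Nat.le_div_iff_mul_le (by omega)]
    have e : q * (k + l) = k * q + l * q := by ring
    omega
  omega

lemma exists_klSumFree {p k l : ℕ} (hp : p.Prime) (hl : 0 < l) (hkl : l < k)
    (hd : ¬ p ∣ k - l) :
    ∃ A : Finset (ZMod p), KLSumFree k l A ∧ A.card = (p - 2) / (k + l) + 1 := by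
  have : Fact p.Prime := ⟨hp⟩
  have hp2 := hp.two_le
  set q := (p - 2) / (k + l)
  have hq : k * q + l * q + 2 ≤ p := by
    have h : q * (k + l) ≤ p - 2 := Nat.div_mul_le_self _ _
    have e : q * (k + l) = k * q + l * q := by ring
    omega
  have hqp : q < p := by nlinarith
  have hc : ((k - l : ℕ) : ZMod p) ≠ 0 := by
    rwa [Ne, ZMod.natCast_eq_zero_iff]
  -- `a` solves `(k - l) a = l q + 1`.
  obtain ⟨a, ha⟩ : ∃ a : ZMod p, ((k - l : ℕ) : ZMod p) * a = ((l * q + 1 : ℕ) : ZMod p) :=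
    ⟨((k - l : ℕ) : ZMod p)⁻¹ * ((l * q + 1 : ℕ) : ZMod p), by rw [mul_inv_cancel_left₀ hc]⟩
  refine ⟨(Finset.range (q + 1)).image (fun i : ℕ => a + (i : ZMod p)), ?_, ?_⟩
  · rw [KLSumFree, Finset.disjoint_left]
    intro x hx hy
    obtain ⟨i, hi, rfl⟩ := exists_of_mem_foldSum_interval a q k hx
    obtain ⟨j, hj, hij⟩ := exists_of_mem_foldSum_interval a q l hy
    have h0 : ((l * q + 1 + i - j : ℕ) : ZMod p) = 0 := by
      rw [Nat.cast_sub (by omega), Nat.cast_add, ← ha, Nat.cast_sub hkl.le]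
      linear_combination hij
    rw [ZMod.natCast_eq_zero_iff] at h0
    have := Nat.le_of_dvd (by omega) h0
    omega
  · rw [Finset.card_image_of_injOn, Finset.card_range]
    intro i hi j hj hij
    have hi' : i < q + 1 := by simpa using hi
    have hj' : j < q + 1 := by simpa using hj
    have h : (i : ZMod p) = (j : ZMod p) := add_left_cancel hij
    rw [ZMod.natCast_eq_natCast_iff', Nat.mod_eq_of_lt (by omega),
      Nat.mod_eq_of_lt (by omega)] at h
    exact h

theorem stmt8 (p k l : ℕ) (hp : p.Prime) (hl : 0 < l) (hkl : l < k) :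
    (p ∣ k - l → mu (ZMod p) k l = 0) ∧
      (¬ p ∣ k - l → mu (ZMod p) k l = cdiv (p - 1) (k + l)) := by
  constructor
  · intro hd
    refine IsGreatest.csSup_eq ⟨⟨∅, ?_, rfl⟩, ?_⟩
    · obtain ⟨n, rfl⟩ : ∃ n, k = n + 1 := ⟨k - 1, by omega⟩
      simp [KLSumFree, foldSum]
    rintro m ⟨A, hA, rfl⟩
    rw [Nat.le_zero, Finset.card_eq_zero, Finset.eq_empty_iff_forall_notMem]
    intro a ha
    have e : k • a = l • a := by
      have h : ((k - l : ℕ) : ZMod p) = 0 := (ZMod.natCast_eq_zero_iff _ _).mpr hd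
      rw [Nat.cast_sub hkl.le, sub_eq_zero] at h
      rw [nsmul_eq_mul, nsmul_eq_mul, h]
    exact Finset.disjoint_left.mp hA (nsmul_mem_foldSum ha k) (e ▸ nsmul_mem_foldSum ha l)
  · intro hd
    rw [cdiv_eq hp.two_le (by omega)]
    refine IsGreatest.csSup_eq ⟨exists_klSumFree hp hl hkl hd, ?_⟩
    rintro m ⟨A, hA, rfl⟩
    exact card_le_of_klSumFree hp hl hA
end
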